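/- For every unimodular lattice Λ ⊆ K̃^2, μ(Λ) = q^{-2}, where μ(Λ) = sup_{w ∈ K̃^2} inf_{u ∈ Λ} |w₁ − u₁|·|w₂ − u₂|. In particular the Minkowski spectrum in dimension 2, S₂ = {μ(Λ) : Λ a unimodular lattice in K̃^2}, equals {q^{-2}}. -/

import Mathlib

noncomputable section

open scoped Classical

variable (Fq : Type) [Field Fq] [Fintype Fq]

/-- `K̃ = 𝔽_q((x⁻¹))`, realized as formal Laurent series in `t = x⁻¹`. -/
abbrev Kt := LaurentSeries Fq

/-- The element `x` of `K̃` (the inverse of the Laurent series variable). -/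
def Kx : Kt Fq := HahnSeries.single (-1 : ℤ) 1

/-- Absolute value `|f| = q^{deg f}`, i.e. `q^{-order f}` in terms of `t = x⁻¹`. -/
def Kabs (f : Kt Fq) : ℝ := if f = 0 then 0 else (Fintype.card Fq : ℝ) ^ (-f.order)

/-- The ring embedding of `R = 𝔽_q[x]` into `K̃`. -/
def polyK : Polynomial Fq →+* Kt Fq := (Polynomial.aeval (Kx Fq)).toRingHom

/-- Sup norm on `K̃^d`. -/
def vnorm {d : ℕ} (v : Fin d → Kt Fq) : ℝ := ⨆ i, Kabs Fq (v i)

/-- The lattice `g·R^d`. -/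
def lattice {d : ℕ} (g : Matrix (Fin d) (Fin d) (Kt Fq)) : Set (Fin d → Kt Fq) :=
  {v | ∃ c : Fin d → Polynomial Fq, v = g.mulVec fun j => polyK Fq (c j)}

/-- `i`-th successive minimum of `Λ` with respect to a norm `nrm`: the least `r > 0` such that
`Λ` contains `i` linearly independent vectors of norm at most `r`. -/
def minimaN {d : ℕ} (nrm : (Fin d → Kt Fq) → ℝ) (Λ : Set (Fin d → Kt Fq)) (i : ℕ) : ℝ :=
  sInf {r : ℝ | 0 < r ∧ ∃ v : Fin i → Fin d → Kt Fq,
    (∀ j, v j ∈ Λ) ∧ LinearIndependent (Kt Fq) v ∧ ∀ j, nrm (v j) ≤ r}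

/-- `i`-th successive minimum with respect to the sup norm. -/
def minima {d : ℕ} (Λ : Set (Fin d → Kt Fq)) (i : ℕ) : ℝ := minimaN Fq (vnorm Fq) Λ i

/-- Covering radius of `Λ` with respect to the norm `nrm`. -/
def covRad {d : ℕ} (nrm : (Fin d → Kt Fq) → ℝ) (Λ : Set (Fin d → Kt Fq)) : ℝ :=
  ⨆ w : Fin d → Kt Fq, ⨅ u : Λ, nrm (w - u.1)

/-- Length of the shortest nonzero vector of `Λ`. -/
def ell {d : ℕ} (Λ : Set (Fin d → Kt Fq)) : ℝ :=
  sInf {r : ℝ | ∃ v ∈ Λ, v ≠ 0 ∧ vnorm Fq v = r}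

/-- `Λ` is well rounded: it contains `d` linearly independent vectors of norm `ℓ(Λ)`. -/
def IsWellRounded {d : ℕ} (Λ : Set (Fin d → Kt Fq)) : Prop :=
  ∃ v : Fin d → Fin d → Kt Fq, (∀ j, v j ∈ Λ) ∧ LinearIndependent (Kt Fq) v ∧
    ∀ j, vnorm Fq (v j) = ell Fq Λ

/-- The multiplicative "norm" `N(v) = ∏ |v i|`. -/
def Nprod {d : ℕ} (v : Fin d → Kt Fq) : ℝ := ∏ i, Kabs Fq (v i)

/-- The Minkowski function `μ(Λ) = sup_w inf_{u ∈ Λ} N(w - u)`. -/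
def mink {d : ℕ} (Λ : Set (Fin d → Kt Fq)) : ℝ :=
  ⨆ w : Fin d → Kt Fq, ⨅ u : Λ, Nprod Fq (w - u.1)

/-!
Let `Λ = g R²` with `|det g| = q^{-d}`, and call `|y₁| ≤ q^{-a}`, `|y₂| ≤ q^{-b}` the box `(a, b)`.
A continued fraction step (round a complementary basis vector) turns a primitive vector of `Λ` in a
box with `a + b ≤ d` into one in the box `(a + 1, b)`, so every box `(a, d + 1 - a)` contains a
primitive vector `v_a`.

Upper bound: one more step gives a basis of `Λ` inside a single box with `a + b = d`. Rounding the
coordinates in this basis moves every point into the box `(a + 1, b + 1)`, where `N ≤ q^{-(d+2)}`.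

Lower bound: two vectors `v_a`, `v_b` whose first coordinates have the same absolute value are
proportional over `𝔽_q`, and representatives of the different absolute values are linearly
independent over `𝔽_q`, so some linear functional `ψ` on `R² ≅ Λ` vanishes at no `v_a`. By residue
duality `ψ` is the residue of the pairing `det(·, t)` for some `t ∈ K̃²`. If
`N (g t - g u) < q^{-(d+2)}` with `u ∈ R²`, then `g (t - u)` is small enough against one of the
`v_a` for the residue of their determinant, which is `ψ (v_a)` because `u` is integral, to vanish.
-/

section Ball

variable {F : Type} [Field F]

/-- The fractional ideal `t^n 𝔽_q[[t]]` with `t = x⁻¹`, i.e. the closed ball of radius `q^{-n}`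
around `0`, phrased through `orderTop` so that it makes sense over any field of coefficients. -/
def ball (n : ℤ) : AddSubgroup (Kt F) where
  carrier := {f | (n : WithTop ℤ) ≤ f.orderTop}
  zero_mem' := by simp
  add_mem' {f g} (hf : (n : WithTop ℤ) ≤ f.orderTop) (hg : (n : WithTop ℤ) ≤ g.orderTop) :=
    show (n : WithTop ℤ) ≤ (f + g).orderTop from
      (le_min hf hg).trans HahnSeries.min_orderTop_le_orderTop_add
  neg_mem' hf := by simpa using hf

theorem mem_ball_iff_le_orderTop {n : ℤ} {f : Kt F} :
    f ∈ ball n ↔ (n : WithTop ℤ) ≤ f.orderTop :=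
  Iff.rfl

theorem mem_ball_iff_coeff {n : ℤ} {f : Kt F} : f ∈ ball n ↔ ∀ k < n, f.coeff k = 0 := by
  simp [mem_ball_iff_le_orderTop, HahnSeries.le_orderTop_iff_forall]

theorem mem_ball_iff_le_order {n : ℤ} {f : Kt F} (hf : f ≠ 0) : f ∈ ball n ↔ n ≤ f.order := by
  rw [mem_ball_iff_le_orderTop, ← HahnSeries.order_eq_orderTop_of_ne_zero hf, WithTop.coe_le_coe]

theorem mem_ball_order (f : Kt F) : f ∈ ball f.order := by
  rcases eq_or_ne f 0 with rfl | hf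
  · exact zero_mem _
  · exact (mem_ball_iff_le_order hf).2 le_rfl

theorem mem_ball_of_le {m n : ℤ} {f : Kt F} (hf : f ∈ ball n) (hmn : m ≤ n) : f ∈ ball m :=
  (WithTop.coe_le_coe.2 hmn).trans hf

theorem mul_mem_ball {m n : ℤ} {f g : Kt F} (hf : f ∈ ball m) (hg : g ∈ ball n) :
    f * g ∈ ball (m + n) := by
  rw [mem_ball_iff_le_orderTop, HahnSeries.orderTop_mul, WithTop.coe_add]
  exact add_le_add hf hg

theorem mul_mem_ball_iff {n : ℤ} {f g : Kt F} (hf : f ≠ 0) :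
    f * g ∈ ball (f.order + n) ↔ g ∈ ball n := by
  rw [mem_ball_iff_le_orderTop, mem_ball_iff_le_orderTop, HahnSeries.orderTop_mul,
    ← HahnSeries.order_eq_orderTop_of_ne_zero hf, WithTop.coe_add,
    WithTop.add_le_add_iff_left WithTop.coe_ne_top]

theorem exists_mem_ball_of_mul_mem_ball {n : ℤ} {f g : Kt F} (h : f * g ∈ ball n) :
    ∃ a b, a + b = n ∧ f ∈ ball a ∧ g ∈ ball b := by
  rcases eq_or_ne f 0 with rfl | hf
  · exact ⟨n - g.order, g.order, by omega, zero_mem _, mem_ball_order g⟩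
  · refine ⟨f.order, n - f.order, by omega, mem_ball_order f, (mul_mem_ball_iff hf).1 ?_⟩
    rwa [add_sub_cancel]

end Ball

section Polynomial

variable {F : Type} [Field F]

theorem polyK_monomial (n : ℕ) (r : F) :
    polyK F (Polynomial.monomial n r) = HahnSeries.single (-(n : ℤ)) r := by
  have hC : algebraMap F (Kt F) r = HahnSeries.C r := HahnSeries.ofPowerSeries_C r
  have hX : Kx F ^ n = HahnSeries.single (-(n : ℤ)) 1 := by simp [Kx, HahnSeries.single_pow]
  calc polyK F (Polynomial.monomial n r) = algebraMap F (Kt F) r * Kx F ^ n :=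
        Polynomial.aeval_monomial _
    _ = HahnSeries.single (-(n : ℤ)) r := by simp [hC, hX, HahnSeries.C_apply]

theorem polyK_smul (r : F) (p : Polynomial F) : polyK F (r • p) = r • polyK F p := by
  rw [Polynomial.smul_eq_C_mul, map_mul, ← Polynomial.monomial_zero_left, polyK_monomial,
    Nat.cast_zero, neg_zero, HahnSeries.single_zero_mul_eq_smul]

theorem coeff_polyK_neg (p : Polynomial F) (n : ℕ) :
    (polyK F p).coeff (-(n : ℤ)) = p.coeff n := by
  induction p using Polynomial.induction_on' with
  | add p q hp hq => simp [hp, hq]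
  | monomial m r =>
    simp [polyK_monomial, Polynomial.coeff_monomial, HahnSeries.coeff_single, eq_comm]

theorem coeff_polyK_of_pos (p : Polynomial F) {k : ℤ} (hk : 0 < k) : (polyK F p).coeff k = 0 := by
  induction p using Polynomial.induction_on' with
  | add p q hp hq => simp [hp, hq]
  | monomial m r =>
    rw [polyK_monomial, HahnSeries.coeff_single_of_ne (by omega)]

theorem eq_zero_of_polyK_mem_ball_one {p : Polynomial F} (h : polyK F p ∈ ball 1) : p = 0 := by
  ext n
  rw [← coeff_polyK_neg, mem_ball_iff_coeff.1 h _ (by omega), Polynomial.coeff_zero]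

theorem polyK_ne_zero {p : Polynomial F} (hp : p ≠ 0) : polyK F p ≠ 0 := fun h =>
  hp (eq_zero_of_polyK_mem_ball_one (h ▸ zero_mem _))

theorem exists_sub_polyK_mem_ball_one (f : Kt F) :
    ∃ p : Polynomial F, f - polyK F p ∈ ball 1 := by
  let N := (-f.order).toNat + 1
  refine ⟨∑ n ∈ Finset.range N, Polynomial.monomial n (f.coeff (-(n : ℤ))),
    mem_ball_iff_coeff.2 fun k hk => ?_⟩
  obtain ⟨n, rfl⟩ : ∃ n : ℕ, k = -(n : ℤ) := ⟨(-k).toNat, by omega⟩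
  have hf : N ≤ n → f.coeff (-(n : ℤ)) = 0 := fun hn =>
    HahnSeries.coeff_eq_zero_of_lt_order (by omega)
  rw [HahnSeries.coeff_sub, coeff_polyK_neg, Polynomial.finsetSum_coeff]
  simp only [Polynomial.coeff_monomial, Finset.sum_ite_eq', Finset.mem_range]
  split_ifs with hn
  · exact sub_self _
  · rw [hf (not_lt.1 hn), sub_zero]

theorem exists_coeff_one_polyK_mul_eq (φ : Polynomial F →ₗ[F] F) :
    ∃ s : Kt F, ∀ p : Polynomial F, (polyK F p * s).coeff 1 = φ p := by
  refine ⟨HahnSeries.single 1 1 * HahnSeries.ofPowerSeries ℤ F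
    (PowerSeries.mk fun n => φ (Polynomial.monomial n 1)), fun p => ?_⟩
  induction p using Polynomial.induction_on' with
  | add p q hp hq => rw [map_add, add_mul, HahnSeries.coeff_add, hp, hq, map_add]
  | monomial n r =>
    have hn : (1 : ℤ) - (-(n : ℤ) + 1) = n := by ring
    rw [polyK_monomial, ← mul_assoc, HahnSeries.single_mul_single, HahnSeries.coeff_single_mul, hn,
      HahnSeries.ofPowerSeries_apply_coeff, PowerSeries.coeff_mk, mul_one, ← smul_eq_mul,
      ← map_smul, Polynomial.smul_monomial, smul_eq_mul, mul_one]

end Polynomial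

section Cross

/-- The determinant of the `2 × 2` matrix with rows `v` and `w`, as an alternating pairing of
vectors. -/
def cross {A : Type*} [CommRing A] (v w : Fin 2 → A) : A := v 0 * w 1 - v 1 * w 0

theorem det_eq_cross {A : Type*} [CommRing A] (g : Matrix (Fin 2) (Fin 2) A) :
    g.det = cross (g 0) (g 1) := Matrix.det_fin_two g

theorem cross_swap {A : Type*} [CommRing A] (v w : Fin 2 → A) : cross w v = -cross v w := by
  simp only [cross]
  ring

theorem cross_dotProduct {A : Type*} [CommRing A] (r s v w : Fin 2 → A) :
    (r ⬝ᵥ v) * (s ⬝ᵥ w) - (s ⬝ᵥ v) * (r ⬝ᵥ w) = cross r s * cross v w := by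
  simp only [cross, dotProduct, Fin.sum_univ_two]
  ring

theorem isCoprime_iff_exists_cross_eq_one {A : Type*} [CommRing A] {v : Fin 2 → A} :
    IsCoprime (v 0) (v 1) ↔ ∃ w, cross v w = 1 := by
  constructor
  · rintro ⟨a, b, hab⟩
    exact ⟨![-b, a], by simp only [cross, Matrix.cons_val_zero, Matrix.cons_val_one, ← hab]; ring⟩
  · rintro ⟨w, hw⟩
    exact ⟨w 1, -w 0, by simp only [cross] at hw; linear_combination hw⟩

theorem exists_eq_smul_add_smul {L : Type*} [Field L] {v w : Fin 2 → L} (h : cross v w ≠ 0)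
    (z : Fin 2 → L) : ∃ x y : L, z = x • v + y • w := by
  refine ⟨cross z w / cross v w, cross v z / cross v w, funext fun i => ?_⟩
  have hi : z i * cross v w = cross z w * v i + cross v z * w i := by
    fin_cases i <;> simp only [cross, Fin.zero_eta, Fin.mk_one] <;> ring
  simp only [Pi.add_apply, Pi.smul_apply, smul_eq_mul, div_mul_eq_mul_div, ← add_div]
  exact (eq_div_iff h).2 hi

theorem exists_eq_smul_of_cross_eq_zero {F : Type*} [Field F] {c c' : Fin 2 → Polynomial F}
    (hc : IsCoprime (c 0) (c 1)) (hc' : IsCoprime (c' 0) (c' 1)) (h : cross c c' = 0) :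
    ∃ r : F, r ≠ 0 ∧ c' = r • c := by
  obtain ⟨a, b, hab⟩ := hc
  simp only [cross] at h
  have h0 : c' 0 = (a * c' 0 + b * c' 1) * c 0 := by linear_combination (-c' 0) * hab - b * h
  have h1 : c' 1 = (a * c' 0 + b * c' 1) * c 1 := by linear_combination (-c' 1) * hab + a * h
  have hunit : IsUnit (a * c' 0 + b * c' 1) :=
    hc'.isUnit_of_dvd' (Dvd.intro _ h0.symm) (Dvd.intro _ h1.symm)
  obtain ⟨r, hr, hrC⟩ := Polynomial.isUnit_iff.1 hunit
  rw [← hrC] at h0 h1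
  refine ⟨r, hr.ne_zero, funext fun i => ?_⟩
  rw [Pi.smul_apply, Polynomial.smul_eq_C_mul]
  fin_cases i
  exacts [h0, h1]

end Cross

section LatticeBox

variable {F : Type} [Field F]

/-- The coordinate, along the row `r` of `g`, of the lattice vector `g c` with `c ∈ R²`. -/
def rowForm (r : Fin 2 → Kt F) : (Fin 2 → Polynomial F) →ₗ[F] Kt F where
  toFun c := r ⬝ᵥ fun j => polyK F (c j)
  map_add' c e := by
    simp only [dotProduct, Pi.add_apply, map_add, mul_add, Finset.sum_add_distrib]
  map_smul' a c := by
    simp only [dotProduct, Fin.sum_univ_two, Pi.smul_apply, polyK_smul, RingHom.id_apply,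
      ← HahnSeries.single_zero_mul_eq_smul]
    ring

theorem rowForm_polynomial_smul (r : Fin 2 → Kt F) (p : Polynomial F) (c : Fin 2 → Polynomial F) :
    rowForm r (p • c) = polyK F p * rowForm r c := by
  simp only [rowForm, LinearMap.coe_mk, AddHom.coe_mk, dotProduct, Fin.sum_univ_two,
    Pi.smul_apply, smul_eq_mul, map_mul]
  ring

theorem cross_rowForm (r s : Fin 2 → Kt F) (c e : Fin 2 → Polynomial F) :
    rowForm r c * rowForm s e - rowForm s c * rowForm r e = cross r s * polyK F (cross c e) := by
  simp only [rowForm, LinearMap.coe_mk, AddHom.coe_mk, cross_dotProduct]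
  simp only [cross, map_sub, map_mul]

/-- The coefficient vectors `c ∈ R²` for which the vector `g c` of the lattice with rows `r`, `s`
lies in the box `|y₁| ≤ q^{-a}`, `|y₂| ≤ q^{-b}`. -/
def latticeBox (r s : Fin 2 → Kt F) (a b : ℤ) : Set (Fin 2 → Polynomial F) :=
  {c | rowForm r c ∈ ball a ∧ rowForm s c ∈ ball b}

theorem cross_eq_zero_of_mem_latticeBox {r s : Fin 2 → Kt F} (hrs : cross r s ≠ 0) {a b : ℤ}
    (hab : (cross r s).order < a + b) {c e : Fin 2 → Polynomial F} (hc : c ∈ latticeBox r s a b)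
    (he : e ∈ latticeBox r s a b) : cross c e = 0 := by
  have h : rowForm r c * rowForm s e - rowForm s c * rowForm r e ∈ ball (a + b) :=
    sub_mem (mul_mem_ball hc.1 he.2) (mem_ball_of_le (mul_mem_ball hc.2 he.1) (add_comm a b).le)
  rw [cross_rowForm] at h
  exact eq_zero_of_polyK_mem_ball_one ((mul_mem_ball_iff hrs).1 (mem_ball_of_le h (by omega)))

-- One step of the continued fraction algorithm: the complement is reduced modulo `c`.
theorem exists_cross_eq_one_mem_latticeBox {r s : Fin 2 → Kt F} {c : Fin 2 → Polynomial F} {b : ℤ}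
    (hc : IsCoprime (c 0) (c 1)) (hr : rowForm r c ≠ 0) (hs : rowForm s c ∈ ball b)
    (hrs : cross r s ∈ ball ((rowForm r c).order + b)) :
    ∃ e, cross c e = 1 ∧ e ∈ latticeBox r s ((rowForm r c).order + 1) b := by
  obtain ⟨e, he⟩ := isCoprime_iff_exists_cross_eq_one.1 hc
  obtain ⟨p, hp⟩ := exists_sub_polyK_mem_ball_one (rowForm r e / rowForm r c)
  have hcross : cross c (e - p • c) = 1 := by
    rw [← he]
    simp only [cross, Pi.sub_apply, Pi.smul_apply, smul_eq_mul]
    ring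
  have hfirst : rowForm r (e - p • c) ∈ ball ((rowForm r c).order + 1) := by
    have heq : rowForm r (e - p • c) = rowForm r c * (rowForm r e / rowForm r c - polyK F p) := by
      rw [map_sub, rowForm_polynomial_smul, mul_sub, mul_div_cancel₀ _ hr, mul_comm (polyK F p)]
    rw [heq]
    exact mul_mem_ball (mem_ball_order _) hp
  refine ⟨e - p • c, hcross, hfirst, (mul_mem_ball_iff hr).1 ?_⟩
  have hbinet := cross_rowForm r s c (e - p • c)
  rw [hcross, map_one, mul_one, sub_eq_iff_eq_add] at hbinet
  rw [hbinet]
  exact add_mem hrs (mem_ball_of_le (mul_mem_ball hs hfirst) (by omega))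

/-- The box `|y₁| ≤ q^{-a}`, `|y₂| ≤ q^{-b}` contains a primitive vector of the lattice with rows
`r`, `s`, i.e. one with coprime coefficients. -/
def HasPrimitiveVector (r s : Fin 2 → Kt F) (a b : ℤ) : Prop :=
  ∃ c ∈ latticeBox r s a b, IsCoprime (c 0) (c 1)

theorem HasPrimitiveVector.swap {r s : Fin 2 → Kt F} {a b : ℤ} (h : HasPrimitiveVector r s a b) :
    HasPrimitiveVector s r b a :=
  let ⟨c, ⟨hr, hs⟩, hc⟩ := h
  ⟨c, ⟨hs, hr⟩, hc⟩

theorem HasPrimitiveVector.add_one {r s : Fin 2 → Kt F} {a b : ℤ} (hrs : cross r s ∈ ball (a + b))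
    (h : HasPrimitiveVector r s a b) : HasPrimitiveVector r s (a + 1) b := by
  obtain ⟨c, ⟨hr, hs⟩, hc⟩ := h
  by_cases hr' : rowForm r c ∈ ball (a + 1)
  · exact ⟨c, ⟨hr', hs⟩, hc⟩
  have hne : rowForm r c ≠ 0 := fun h0 => hr' (h0 ▸ zero_mem _)
  have horder : (rowForm r c).order = a := by
    rw [mem_ball_iff_le_order hne] at hr hr'
    omega
  rw [← horder] at hrs ⊢
  obtain ⟨e, hce, he⟩ := exists_cross_eq_one_mem_latticeBox hc hne hs hrs
  refine ⟨e, he, isCoprime_iff_exists_cross_eq_one.2 ⟨-c, ?_⟩⟩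
  rw [← hce]
  simp only [cross, Pi.neg_apply]
  ring

theorem HasPrimitiveVector.of_le {r s : Fin 2 → Kt F} {a a' b : ℤ} (haa' : a ≤ a')
    (h : HasPrimitiveVector r s a b) (hrs : cross r s ∈ ball (a' + b - 1)) :
    HasPrimitiveVector r s a' b := by
  induction a', haa' using Int.leInduction with
  | base => exact h
  | succ n _ ih =>
    exact (ih (mem_ball_of_le hrs (by omega))).add_one (mem_ball_of_le hrs (by omega))

-- Minkowski's convex body theorem for boxes, in a form that yields a primitive vector.
theorem hasPrimitiveVector {r s : Fin 2 → Kt F} {a b : ℤ} (hrs : cross r s ∈ ball (a + b - 1)) :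
    HasPrimitiveVector r s a b := by
  let e : Fin 2 → Polynomial F := ![1, 0]
  let a₀ := min a (rowForm r e).order
  let b₀ := min b (rowForm s e).order
  have h₀ : HasPrimitiveVector r s a₀ b₀ :=
    ⟨e, ⟨mem_ball_of_le (mem_ball_order _) (min_le_right _ _),
      mem_ball_of_le (mem_ball_order _) (min_le_right _ _)⟩, isCoprime_one_left⟩
  have hb₀ : b₀ ≤ b := min_le_left _ _
  have h₁ : HasPrimitiveVector r s a b₀ :=
    h₀.of_le (min_le_left _ _) (mem_ball_of_le hrs (by omega))
  refine (h₁.swap.of_le hb₀ ?_).swap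
  rw [cross_swap, add_comm b a]
  exact neg_mem hrs

end LatticeBox

section UpperBound

variable {F : Type} [Field F]

theorem exists_basis_mem_latticeBox_of_rowForm_ne_zero {r s : Fin 2 → Kt F} {a b : ℤ}
    (hab : a + b = (cross r s).order + 1) {c : Fin 2 → Polynomial F} (hc : IsCoprime (c 0) (c 1))
    (hbox : c ∈ latticeBox r s a b) (hr : rowForm r c ≠ 0) :
    ∃ a' b' e, a' + b' = (cross r s).order ∧ cross c e = 1 ∧
      c ∈ latticeBox r s a' b' ∧ e ∈ latticeBox r s a' b' := by
  let n := (rowForm r c).order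
  have han : a ≤ n := (mem_ball_iff_le_order hr).1 hbox.1
  have hs : rowForm s c ∈ ball ((cross r s).order - n) := mem_ball_of_le hbox.2 (by omega)
  obtain ⟨e, hce, her, hes⟩ := exists_cross_eq_one_mem_latticeBox hc hr hs
    (mem_ball_of_le (mem_ball_order _) (by omega))
  exact ⟨n, (cross r s).order - n, e, by omega, hce, ⟨mem_ball_order _, hs⟩,
    mem_ball_of_le her (by omega), hes⟩

theorem exists_basis_mem_latticeBox {r s : Fin 2 → Kt F} (hrs : cross r s ≠ 0) :
    ∃ a b c e, a + b = (cross r s).order ∧ cross c e = 1 ∧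
      c ∈ latticeBox r s a b ∧ e ∈ latticeBox r s a b := by
  obtain ⟨c, hbox, hc⟩ := hasPrimitiveVector (r := r) (s := s) (a := 0)
    (b := (cross r s).order + 1) (mem_ball_of_le (mem_ball_order _) (by omega))
  by_cases hr : rowForm r c = 0
  · have hs : rowForm s c ≠ 0 := by
      intro hs
      obtain ⟨e, he⟩ := isCoprime_iff_exists_cross_eq_one.1 hc
      have h := cross_rowForm r s c e
      rw [hr, hs, he, map_one, mul_one, zero_mul, zero_mul, sub_zero] at h
      exact hrs h.symm
    have horder : (cross s r).order = (cross r s).order := by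
      rw [cross_swap, HahnSeries.order_neg]
    obtain ⟨b, a, e, hab, hce, hcb, heb⟩ := exists_basis_mem_latticeBox_of_rowForm_ne_zero
      (by omega) hc hbox.symm hs
    exact ⟨a, b, c, e, by omega, hce, hcb.symm, heb.symm⟩
  · obtain ⟨a, b, e, h⟩ := exists_basis_mem_latticeBox_of_rowForm_ne_zero (by omega) hc hbox hr
    exact ⟨a, b, c, e, h⟩

theorem exists_sub_rowForm_mem_ball {r s : Fin 2 → Kt F} (hrs : cross r s ≠ 0) {a b : ℤ}
    {c e : Fin 2 → Polynomial F} (hce : cross c e ≠ 0) (hc : c ∈ latticeBox r s a b)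
    (he : e ∈ latticeBox r s a b) (z : Fin 2 → Kt F) :
    ∃ u, z 0 - rowForm r u ∈ ball (1 + a) ∧ z 1 - rowForm s u ∈ ball (1 + b) := by
  have hindep : cross ![rowForm r c, rowForm s c] ![rowForm r e, rowForm s e] ≠ 0 :=
    (cross_rowForm r s c e).trans_ne (mul_ne_zero hrs (polyK_ne_zero hce))
  obtain ⟨x, y, rfl⟩ := exists_eq_smul_add_smul hindep z
  obtain ⟨p, hp⟩ := exists_sub_polyK_mem_ball_one x
  obtain ⟨p', hp'⟩ := exists_sub_polyK_mem_ball_one y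
  have hsub (l : Fin 2 → Kt F) : x * rowForm l c + y * rowForm l e - rowForm l (p • c + p' • e) =
      (x - polyK F p) * rowForm l c + (y - polyK F p') * rowForm l e := by
    rw [map_add, rowForm_polynomial_smul, rowForm_polynomial_smul]
    ring
  exact ⟨p • c + p' • e,
    (hsub r).symm ▸ add_mem (mul_mem_ball hp hc.1) (mul_mem_ball hp' he.1),
    (hsub s).symm ▸ add_mem (mul_mem_ball hp hc.2) (mul_mem_ball hp' he.2)⟩

theorem exists_mul_sub_rowForm_mem_ball {r s : Fin 2 → Kt F} (hrs : cross r s ≠ 0)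
    (z : Fin 2 → Kt F) :
    ∃ u, (z 0 - rowForm r u) * (z 1 - rowForm s u) ∈ ball ((cross r s).order + 2) := by
  obtain ⟨a, b, c, e, hab, hce, hc, he⟩ := exists_basis_mem_latticeBox hrs
  obtain ⟨u, hr, hs⟩ := exists_sub_rowForm_mem_ball hrs (hce.trans_ne one_ne_zero) hc he z
  exact ⟨u, mem_ball_of_le (mul_mem_ball hr hs) (by omega)⟩

end UpperBound

section LowerBound

theorem linearIndependent_of_injective_orderTop {Γ F V ι : Type*} [LinearOrder Γ] [Field F]
    [AddCommGroup V] [Module F V] (L : V →ₗ[F] HahnSeries Γ F) {v : ι → V} (hv : ∀ i, v i ≠ 0)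
    (hinj : Function.Injective fun i => (L (v i)).orderTop) : LinearIndependent F v := by
  rw [linearIndependent_iff']
  intro s l hsum
  by_contra! hne
  obtain ⟨i, hi, hli⟩ := hne
  obtain ⟨j, hj, hmin⟩ := Finset.exists_min_image (s.filter fun k => l k ≠ 0)
    (fun k => (L (v k)).orderTop) ⟨i, Finset.mem_filter.2 ⟨hi, hli⟩⟩
  obtain ⟨hjs, hlj⟩ := Finset.mem_filter.1 hj
  have hlt : ∀ k ∈ s, k ≠ j → l k ≠ 0 → (L (v j)).orderTop < (L (v k)).orderTop :=
    fun k hk hkj hlk => (hmin k (Finset.mem_filter.2 ⟨hk, hlk⟩)).lt_of_ne (hinj.ne hkj.symm)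
  cases htop : (L (v j)).orderTop with
  | top =>
    have hterm : ∀ k ∈ s, k ≠ j → l k • v k = 0 := by
      intro k hk hkj
      by_contra hk0
      exact not_top_lt (htop ▸ hlt k hk hkj (left_ne_zero_of_smul hk0))
    rw [Finset.sum_eq_single_of_mem j hjs hterm] at hsum
    exact smul_ne_zero hlj (hv j) hsum
  | coe n =>
    have hcoeff : ∑ k ∈ s, l k * (L (v k)).coeff n = 0 := by
      have h := congrArg (fun x => (L x).coeff n) hsum
      simpa [HahnSeries.coeff_sum] using h
    have hterm : ∀ k ∈ s, k ≠ j → l k * (L (v k)).coeff n = 0 := by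
      intro k hk hkj
      by_contra hk0
      exact hk0 (mul_eq_zero_of_right _ (HahnSeries.coeff_eq_zero_of_lt_orderTop
        (htop ▸ hlt k hk hkj (left_ne_zero_of_mul hk0))))
    rw [Finset.sum_eq_single_of_mem j hjs hterm] at hcoeff
    exact mul_ne_zero hlj (HahnSeries.coeff_orderTop_ne htop) hcoeff

variable {F : Type} [Field F]

theorem cross_eq_zero_of_orderTop_eq {r s : Fin 2 → Kt F} (hrs : cross r s ≠ 0) {a b a' b' : ℤ}
    (hab : (cross r s).order < a + b) (hab' : (cross r s).order < a' + b')
    {c e : Fin 2 → Polynomial F} (hc : c ∈ latticeBox r s a b) (he : e ∈ latticeBox r s a' b')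
    (heq : (rowForm r c).orderTop = (rowForm r e).orderTop) : cross c e = 0 := by
  rcases le_total b b' with hbb' | hbb'
  · exact cross_eq_zero_of_mem_latticeBox hrs hab hc
      ⟨hc.1.trans_eq heq, mem_ball_of_le he.2 hbb'⟩
  · exact cross_eq_zero_of_mem_latticeBox hrs hab'
      ⟨he.1.trans_eq heq.symm, mem_ball_of_le hc.2 hbb'⟩ he

theorem exists_linearMap_ne_zero_on_latticeBox {r s : Fin 2 → Kt F} (hrs : cross r s ≠ 0) :
    ∃ ψ : (Fin 2 → Polynomial F) →ₗ[F] F, ∀ a b, a + b = (cross r s).order + 1 →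
      ∃ c ∈ latticeBox r s a b, ψ c ≠ 0 := by
  let d := (cross r s).order
  have hprim (a : ℤ) : HasPrimitiveVector r s a (d + 1 - a) :=
    hasPrimitiveVector (mem_ball_of_le (mem_ball_order _) (by omega))
  choose c hbox hc using hprim
  let f (a : ℤ) : WithTop ℤ := (rowForm r (c a)).orderTop
  let rep : Set.range f → ℤ := Set.rangeSplitting f
  have hrep (y : Set.range f) : f (rep y) = y := Set.apply_rangeSplitting f y
  have hne (a : ℤ) : c a ≠ 0 := fun h => not_isCoprime_zero_zero (by simpa [h] using hc a)
  have hindep : LinearIndependent F fun y => c (rep y) := by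
    refine linearIndependent_of_injective_orderTop (rowForm r) (fun y => hne _) fun y y' h => ?_
    exact Subtype.ext ((hrep y).symm.trans (h.trans (hrep y')))
  obtain ⟨ψ, hψ⟩ := Module.exists_dual_forall_apply_eq_one (linearIndepOn_univ_iff.2 hindep)
  refine ⟨ψ, fun a b hab => ⟨c a, ?_, ?_⟩⟩
  · rw [show b = d + 1 - a by omega]
    exact hbox a
  · let y : Set.range f := ⟨f a, a, rfl⟩
    obtain ⟨u, hu, hcu⟩ := exists_eq_smul_of_cross_eq_zero (hc (rep y)) (hc a)
      (cross_eq_zero_of_orderTop_eq hrs (by omega) (by omega) (hbox _) (hbox a) (hrep y))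
    rw [hcu, map_smul, hψ y (Set.mem_univ y), smul_eq_mul, mul_one]
    exact hu

theorem exists_coeff_one_cross_eq (ψ : (Fin 2 → Polynomial F) →ₗ[F] F) :
    ∃ t : Fin 2 → Kt F, ∀ c, (cross (fun j => polyK F (c j)) t).coeff 1 = ψ c := by
  let single (i : Fin 2) := LinearMap.single F (fun _ : Fin 2 => Polynomial F) i
  obtain ⟨t₁, ht₁⟩ := exists_coeff_one_polyK_mul_eq (ψ ∘ₗ single 0)
  obtain ⟨t₀, ht₀⟩ := exists_coeff_one_polyK_mul_eq (-(ψ ∘ₗ single 1))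
  refine ⟨![t₀, t₁], fun c => ?_⟩
  have hc : Pi.single 0 (c 0) + Pi.single 1 (c 1) = c := by
    ext i : 1
    fin_cases i <;> simp
  simp only [cross, Matrix.cons_val_zero, Matrix.cons_val_one, HahnSeries.coeff_sub, ht₁, ht₀,
    LinearMap.neg_apply, LinearMap.comp_apply, single, LinearMap.single_apply, sub_neg_eq_add]
  rw [← map_add, hc]

theorem exists_forall_mul_sub_rowForm_notMem_ball {r s : Fin 2 → Kt F} (hrs : cross r s ≠ 0) :
    ∃ z : Fin 2 → Kt F, ∀ u,
      (z 0 - rowForm r u) * (z 1 - rowForm s u) ∉ ball ((cross r s).order + 3) := by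
  obtain ⟨ψ, hψ⟩ := exists_linearMap_ne_zero_on_latticeBox hrs
  obtain ⟨t, ht⟩ := exists_coeff_one_cross_eq ψ
  refine ⟨![r ⬝ᵥ t, s ⬝ᵥ t], fun u hu => ?_⟩
  obtain ⟨a, b, hab, hr, hs⟩ := exists_mem_ball_of_mul_mem_ball hu
  obtain ⟨c, ⟨hcr, hcs⟩, hc⟩ := hψ (a - 1) (b - 1) (by omega)
  let δ : Fin 2 → Kt F := t - fun j => polyK F (u j)
  have hδ (l : Fin 2 → Kt F) : l ⬝ᵥ δ = l ⬝ᵥ t - rowForm l u := dotProduct_sub _ _ _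
  have hprod : cross r s * cross (fun j => polyK F (c j)) δ ∈ ball ((cross r s).order + 2) := by
    rw [← cross_dotProduct, hδ, hδ]
    exact sub_mem (mem_ball_of_le (mul_mem_ball hcr hs) (by omega))
      (mem_ball_of_le (mul_mem_ball hcs hr) (by omega))
  have hzero : (cross (fun j => polyK F (c j)) δ).coeff 1 = 0 :=
    mem_ball_iff_coeff.1 ((mul_mem_ball_iff hrs).1 hprod) 1 one_lt_two
  have hsplit : cross (fun j => polyK F (c j)) δ =
      cross (fun j => polyK F (c j)) t - polyK F (cross c u) := by
    simp only [δ, cross, Pi.sub_apply, map_sub, map_mul]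
    ring
  rw [hsplit, HahnSeries.coeff_sub, ht, coeff_polyK_of_pos _ one_pos, sub_zero] at hzero
  exact hc hzero

end LowerBound

section Kabs

variable {Fq}

theorem one_lt_card_cast : (1 : ℝ) < Fintype.card Fq := by exact_mod_cast Fintype.one_lt_card

theorem Kabs_of_ne_zero {f : Kt Fq} (hf : f ≠ 0) :
    Kabs Fq f = (Fintype.card Fq : ℝ) ^ (-f.order) := if_neg hf

theorem Kabs_nonneg (f : Kt Fq) : 0 ≤ Kabs Fq f := by
  unfold Kabs
  split_ifs <;> positivity

theorem Kabs_mul (f g : Kt Fq) : Kabs Fq (f * g) = Kabs Fq f * Kabs Fq g := by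
  rcases eq_or_ne f 0 with rfl | hf
  · simp [Kabs]
  rcases eq_or_ne g 0 with rfl | hg
  · simp [Kabs]
  rw [Kabs_of_ne_zero hf, Kabs_of_ne_zero hg, Kabs_of_ne_zero (mul_ne_zero hf hg),
    HahnSeries.order_mul hf hg, neg_add, zpow_add₀ (zero_lt_one.trans one_lt_card_cast).ne']

theorem Kabs_le_zpow_neg_iff {n : ℤ} {f : Kt Fq} :
    Kabs Fq f ≤ (Fintype.card Fq : ℝ) ^ (-n) ↔ f ∈ ball n := by
  rcases eq_or_ne f 0 with rfl | hf
  · exact iff_of_true (by rw [Kabs, if_pos rfl]; positivity) (zero_mem _)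
  · rw [Kabs_of_ne_zero hf, zpow_le_zpow_iff_right₀ one_lt_card_cast, neg_le_neg_iff,
      mem_ball_iff_le_order hf]

theorem zpow_neg_le_Kabs {n : ℤ} {f : Kt Fq} (hf : f ∉ ball (n + 1)) :
    (Fintype.card Fq : ℝ) ^ (-n) ≤ Kabs Fq f := by
  have hf0 : f ≠ 0 := fun h => hf (h ▸ zero_mem _)
  rw [mem_ball_iff_le_order hf0] at hf
  rw [Kabs_of_ne_zero hf0]
  exact zpow_le_zpow_right₀ one_lt_card_cast.le (by omega)

theorem Nprod_fin_two (v : Fin 2 → Kt Fq) : Nprod Fq v = Kabs Fq (v 0 * v 1) := by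
  rw [Nprod, Fin.prod_univ_two, Kabs_mul]

theorem mink_eq_of_forall_exists_le {d : ℕ} {Λ : Set (Fin d → Kt Fq)} {C : ℝ}
    (hle : ∀ w, ∃ u ∈ Λ, Nprod Fq (w - u) ≤ C) (hge : ∃ w, ∀ u ∈ Λ, C ≤ Nprod Fq (w - u)) :
    mink Fq Λ = C := by
  have hbdd (w : Fin d → Kt Fq) : BddBelow (Set.range fun u : Λ => Nprod Fq (w - u.1)) :=
    ⟨0, Set.forall_mem_range.2 fun _ => Finset.prod_nonneg fun _ _ => Kabs_nonneg _⟩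
  have hinf (w : Fin d → Kt Fq) : ⨅ u : Λ, Nprod Fq (w - u.1) ≤ C :=
    let ⟨u, hu, huC⟩ := hle w
    (ciInf_le (hbdd w) ⟨u, hu⟩).trans huC
  obtain ⟨w, hw⟩ := hge
  have : Nonempty Λ := let ⟨u, hu, _⟩ := hle 0; ⟨u, hu⟩
  exact le_antisymm (ciSup_le hinf) <| le_ciSup_of_le ⟨C, Set.forall_mem_range.2 hinf⟩ w <|
    le_ciInf fun u => hw u.1 u.2

end Kabs

theorem mink_dim_two_general (g : Matrix (Fin 2) (Fin 2) (Kt Fq)) (hg : g.det ≠ 0) :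
    mink Fq (lattice Fq g) = (Fintype.card Fq : ℝ) ^ (-2 : ℤ) * Kabs Fq g.det := by
  have hradius : (Fintype.card Fq : ℝ) ^ (-2 : ℤ) * Kabs Fq g.det =
      (Fintype.card Fq : ℝ) ^ (-(g.det.order + 2)) := by
    rw [Kabs_of_ne_zero hg, ← zpow_add₀ (zero_lt_one.trans one_lt_card_cast).ne', neg_add_rev]
  rw [hradius]
  rw [det_eq_cross] at hg ⊢
  refine mink_eq_of_forall_exists_le (fun w => ?_) ?_
  · obtain ⟨c, hc⟩ := exists_mul_sub_rowForm_mem_ball hg w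
    refine ⟨_, ⟨c, rfl⟩, ?_⟩
    rw [Nprod_fin_two]
    exact Kabs_le_zpow_neg_iff.2 hc
  · obtain ⟨w, hw⟩ := exists_forall_mul_sub_rowForm_notMem_ball hg
    refine ⟨w, ?_⟩
    rintro _ ⟨c, rfl⟩
    rw [Nprod_fin_two]
    exact zpow_neg_le_Kabs (by rw [add_assoc]; exact hw c)

/-- In dimension `2`, the Minkowski function is constant:
`μ(Λ) = q^{-2}` for every unimodular lattice `Λ ⊆ K̃²`. In particular `S₂ = {q^{-2}}`. -/
theorem mink_dim_two (g : Matrix (Fin 2) (Fin 2) (Kt Fq)) (hg : Kabs Fq g.det = 1) :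
    mink Fq (lattice Fq g) = (Fintype.card Fq : ℝ) ^ (-2 : ℤ) := by
  have hdet : g.det ≠ 0 := fun h => by simp [Kabs, h] at hg
  rw [mink_dim_two_general Fq g hdet, hg, mul_one]
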